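/- Let O ⊆ ℝ^d be a set such that there exists r > 0 with the property that for every w ∈ ∂O there exists z ∈ B(w, r) with O ⊆ B̄(z, |z-w|). Then the closure of O is strictly convex, in the sense that for all x, y in the closure of O with x ≠ y and all λ ∈ (0,1), the point λx + (1-λ)y lies in the interior of O. -/

import Mathlib

theorem stmt_7 (d : ℕ) (O : Set (EuclideanSpace ℝ (Fin d)))
    (hne : O.Nonempty) (hbdd : Bornology.IsBounded O) (hopen : IsOpen O)
    (hball : ∃ r > (0 : ℝ), ∀ w ∈ frontier O,
      ∃ z ∈ Metric.ball w r, O ⊆ Metric.closedBall z (dist z w)) :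
    ∀ x ∈ closure O, ∀ y ∈ closure O, x ≠ y → ∀ l : ℝ, l ∈ Set.Ioo (0 : ℝ) 1 →
      l • x + (1 - l) • y ∈ interior O := by
  obtain ⟨r, hr, hball⟩ := hball
  intro x hx y hy hxy l hl
  rw [hopen.interior_eq]
  by_contra hp
  obtain ⟨q, hq⟩ := hne
  set p := l • x + (1 - l) • y with hpdef
  have hpre : IsPreconnected (segment ℝ p q) := (convex_segment p q).isPreconnected
  obtain ⟨w, hws, hwf⟩ : (segment ℝ p q ∩ frontier O).Nonempty := by
    by_contra hcon
    rw [Set.not_nonempty_iff_eq_empty] at hcon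
    have h1 : segment ℝ p q ⊆ O ∪ (closure O)ᶜ := by
      intro v hv
      by_contra hv2
      simp only [Set.mem_union, Set.mem_compl_iff, not_or, not_not] at hv2
      have : v ∈ segment ℝ p q ∩ frontier O :=
        ⟨hv, by rw [hopen.frontier_eq]; exact ⟨hv2.2, hv2.1⟩⟩
      rw [hcon] at this
      exact this
    have hpc : p ∈ (closure O)ᶜ := (h1 (left_mem_segment ℝ p q)).resolve_left hp
    obtain ⟨v, -, hv1, hv2⟩ := hpre O (closure O)ᶜ hopen isClosed_closure.isOpen_compl h1
      ⟨q, right_mem_segment ℝ p q, hq⟩ ⟨p, left_mem_segment ℝ p q, hpc⟩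
    exact hv2 (subset_closure hv1)
  obtain ⟨z, -, hz⟩ := hball w hwf
  have hcl : closure O ⊆ Metric.closedBall z (dist z w) :=
    closure_minimal hz Metric.isClosed_closedBall
  have hR : dist z w ≠ 0 := by
    intro h0
    rw [h0, Metric.closedBall_zero] at hcl
    exact hxy ((hcl hx).trans (hcl hy).symm)
  have hpi : p ∈ interior (Metric.closedBall z (dist z w)) :=
    strictConvex_closedBall ℝ z _ (hcl hx) (hcl hy) hxy hl.1 (sub_pos.2 hl.2) (by ring)
  obtain ⟨a, b, ha, hb, hab, rfl⟩ := hws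
  rcases ha.eq_or_lt with rfl | ha
  · have hb1 : b = 1 := by linarith
    subst hb1
    rw [hopen.frontier_eq] at hwf
    apply hwf.2
    simpa using hq
  · have := (convex_closedBall z (dist z (a • p + b • q))).combo_interior_self_mem_interior
      hpi (hz hq) ha hb hab
    rw [interior_closedBall _ hR, Metric.mem_ball, dist_comm] at this
    exact lt_irrefl _ this
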